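/- arXiv:0803.0041 — 2 statements merged into one kernel-verified Lean document; each statement's English description precedes it below -/
import Mathlib

section
/- Let F : X → L(H) be a bounded L(H)-valued norm on a complex normed space X. Then F preserves Cauchy sequences if and only if F is continuous at 0 (with respect to the norm topology of X and the operator-norm topology of L(H)). -/
/-- An `L(H)`-valued norm on a complex normed space `X`: `F x` is a positive operator,
`F` satisfies the triangle inequality in the Loewner order (`S ≤ T` iff `T - S` is positive),
`F` is absolutely homogeneous, and `F x = 0` iff `x = 0`. -/
structure IsOpValuedNorm {X H : Type*} [NormedAddCommGroup X] [NormedSpace ℂ X]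
    [NormedAddCommGroup H] [InnerProductSpace ℂ H] [CompleteSpace H]
    (F : X → H →L[ℂ] H) : Prop where
  isPositive : ∀ x, (F x).IsPositive
  triangle : ∀ x y, (F x + F y - F (x + y)).IsPositive
  smul_eq : ∀ (c : ℂ) (x : X), F (c • x) = ‖c‖ • F x
  eq_zero_iff : ∀ x, F x = 0 ↔ x = 0

/-!
In the Loewner order the triangle inequality and `F (-z) = F z` give
`-F (x - y) ≤ F x - F y ≤ F (x - y)`. The norm of a symmetric operator is the supremum of its
absolute Rayleigh quotients, so `‖F x - F y‖ ≤ ‖F (x - y)‖`, which upgrades continuity at `0` to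
uniform continuity. Conversely, a map that preserves Cauchy sequences is continuous everywhere.
-/

open Filter Topology Uniformity

section LoewnerNorm

variable {𝕜 E : Type*} [RCLike 𝕜] [NormedAddCommGroup E] [InnerProductSpace 𝕜 E]
  {S T : E →L[𝕜] E}

theorem norm_le_norm_of_abs_reApplyInnerSelf_le (hT : (T : E →ₗ[𝕜] E).IsSymmetric)
    (hTS : ∀ x, |T.reApplyInnerSelf x| ≤ S.reApplyInnerSelf x) : ‖T‖ ≤ ‖S‖ := by
  rw [T.norm_eq_iSup_rayleighQuotient hT]
  refine ciSup_le fun x => ?_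
  calc |T.rayleighQuotient x| = |T.reApplyInnerSelf x| / ‖x‖ ^ 2 := by rw [abs_div, abs_sq]
    _ ≤ S.rayleighQuotient x := div_le_div_of_nonneg_right (hTS x) (sq_nonneg _)
    _ ≤ ‖S‖ := (le_abs_self _).trans (S.rayleighQuotient_le_norm x)

theorem reApplyInnerSelf_mono (hTS : T ≤ S) (x : E) :
    T.reApplyInnerSelf x ≤ S.reApplyInnerSelf x := by
  have h : 0 ≤ (S - T).reApplyInnerSelf x := hTS.re_inner_nonneg_left x
  simpa [ContinuousLinearMap.reApplyInnerSelf_apply, inner_sub_left] using h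

theorem isSymmetric_of_neg_le_of_le (hneg : -S ≤ T) (hle : T ≤ S) :
    (T : E →ₗ[𝕜] E).IsSymmetric := by
  have hsub := hneg.isSymmetric.sub hle.isSymmetric
  have hT : (T : E →ₗ[𝕜] E) = (2⁻¹ : 𝕜) • (↑(T - -S) - ↑(S - T) : E →ₗ[𝕜] E) := by
    ext x
    simp only [ContinuousLinearMap.toLinearMap_sub, ContinuousLinearMap.toLinearMap_neg,
      LinearMap.smul_apply, LinearMap.sub_apply, LinearMap.neg_apply]
    module
  rw [hT]
  exact hsub.smul (by rw [map_inv₀, map_ofNat])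

theorem norm_le_norm_of_neg_le_of_le (hneg : -S ≤ T) (hle : T ≤ S) : ‖T‖ ≤ ‖S‖ := by
  refine norm_le_norm_of_abs_reApplyInnerSelf_le (isSymmetric_of_neg_le_of_le hneg hle)
    fun x => abs_le.2 ⟨?_, reApplyInnerSelf_mono hle x⟩
  simpa [ContinuousLinearMap.reApplyInnerSelf_apply] using reApplyInnerSelf_mono hneg x

end LoewnerNorm

theorem continuousAt_of_forall_tendsto_cauchySeq {α β : Type*} [TopologicalSpace α]
    [UniformSpace β] {f : α → β} {a : α} [(𝓝 a).IsCountablyGenerated]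
    (hf : ∀ u : ℕ → α, Tendsto u atTop (𝓝 a) → CauchySeq (f ∘ u)) : ContinuousAt f a := by
  refine tendsto_of_seq_tendsto fun v hv => ?_
  -- Interleaving `v` with the constant `a` forces the limit of `f ∘ v` to be `f a`.
  let u : ℕ → α := fun n => if Even n then v (n / 2) else a
  have hu : Tendsto u atTop (𝓝 a) :=
    (hv.comp (Nat.tendsto_div_const_atTop two_ne_zero)).if' tendsto_const_nhds
  have hu_even : ∀ n, u (2 * n) = v n := fun n => by simp [u]
  have hu_odd : ∀ n, u (2 * n + 1) = a := fun n => by simp [u]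
  have h_even : Tendsto (fun n : ℕ => 2 * n) atTop atTop := tendsto_id.const_mul_atTop' two_pos
  have h_odd : Tendsto (fun n : ℕ => 2 * n + 1) atTop atTop :=
    (tendsto_add_atTop_nat 1).comp h_even
  have hfu : Tendsto (f ∘ u) atTop (𝓝 (f a)) :=
    tendsto_nhds_of_cauchySeq_of_subseq (hf u hu) h_odd <| by
      simp only [Function.comp_def, hu_odd, tendsto_const_nhds]
  simpa only [Function.comp_def, hu_even] using hfu.comp h_even

namespace IsOpValuedNorm

variable {X H : Type*} [NormedAddCommGroup X] [NormedSpace ℂ X]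
  [NormedAddCommGroup H] [InnerProductSpace ℂ H] [CompleteSpace H] {F : X → H →L[ℂ] H}

theorem map_zero (hF : IsOpValuedNorm F) : F 0 = 0 :=
  (hF.eq_zero_iff 0).2 rfl

theorem map_neg (hF : IsOpValuedNorm F) (x : X) : F (-x) = F x := by
  simpa using hF.smul_eq (-1) x

theorem map_sub_map_le_map_sub (hF : IsOpValuedNorm F) (x y : X) : F x - F y ≤ F (x - y) := by
  have h : F (x - y + y) ≤ F (x - y) + F y := hF.triangle (x - y) y
  rw [sub_add_cancel] at h
  exact sub_le_iff_le_add.2 h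

theorem norm_map_sub_map_le (hF : IsOpValuedNorm F) (x y : X) :
    ‖F x - F y‖ ≤ ‖F (x - y)‖ := by
  have hyx : F y - F x ≤ F (x - y) := by
    rw [← neg_sub y x, hF.map_neg]
    exact hF.map_sub_map_le_map_sub y x
  exact norm_le_norm_of_neg_le_of_le (neg_le.1 (by rwa [neg_sub])) (hF.map_sub_map_le_map_sub x y)

theorem uniformContinuous_of_continuousAt_zero (hF : IsOpValuedNorm F)
    (h0 : ContinuousAt F 0) : UniformContinuous F := by
  have hsub : Tendsto (fun p : X × X => p.1 - p.2) (𝓤 X) (𝓝 0) := by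
    rw [uniformity_eq_comap_nhds_zero_swapped]
    exact tendsto_comap
  have hnorm : Tendsto (‖F ·‖) (𝓝 0) (𝓝 0) := by
    simpa only [hF.map_zero, norm_zero] using h0.norm.tendsto
  refine tendsto_uniformity_iff_dist_tendsto_zero.2 <|
    squeeze_zero (fun _ => dist_nonneg) (fun p => ?_) (hnorm.comp hsub)
  rw [dist_eq_norm]
  exact hF.norm_map_sub_map_le p.1 p.2

end IsOpValuedNorm

theorem opValuedNorm_preserves_cauchy_iff_continuousAt_zero_general {X H : Type*}
    [NormedAddCommGroup X] [NormedSpace ℂ X]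
    [NormedAddCommGroup H] [InnerProductSpace ℂ H] [CompleteSpace H]
    (F : X → H →L[ℂ] H) (hF : IsOpValuedNorm F) :
    (∀ u : ℕ → X, CauchySeq u → CauchySeq (fun n => F (u n))) ↔ ContinuousAt F 0 :=
  ⟨fun h => continuousAt_of_forall_tendsto_cauchySeq fun u hu => h u hu.cauchySeq,
    fun h0 _ hu => (hF.uniformContinuous_of_continuousAt_zero h0).comp_cauchySeq hu⟩

/-- A bounded `L(H)`-valued norm `F` on a complex normed space `X` preserves Cauchy
sequences if and only if it is continuous at `0`. -/
theorem opValuedNorm_preserves_cauchy_iff_continuousAt_zero {X H : Type*} [NormedAddCommGroup X] [NormedSpace ℂ X]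
    [NormedAddCommGroup H] [InnerProductSpace ℂ H] [CompleteSpace H] [Nontrivial H]
    (F : X → H →L[ℂ] H) (hF : IsOpValuedNorm F)
    (hbdd : ∃ M : ℝ, ∀ x : X, ‖x‖ = 1 → ‖F x‖ ≤ M) :
    (∀ u : ℕ → X, CauchySeq u → CauchySeq (fun n => F (u n))) ↔ ContinuousAt F 0 :=
  opValuedNorm_preserves_cauchy_iff_continuousAt_zero_general F hF
end

section
/- Let φ : X × X → L(H) be an L(H)-valued inner product on a complex vector space X such that F_φ(x) = φ(x,x)^{1/2} defines an L(H)-valued norm on X (triangle inequality in the Loewner order and absolute homogeneity hold for F_φ), and suppose φ is bounded with constant M > 0, i.e., ‖φ(x,y)‖ ≤ M·‖F_φ(x)‖·‖F_φ(y)‖ for all x, y. If sequences (x_n) and (y_n) in X converge to x and y respectively with respect to F_φ (i.e., for every ε > 0, eventually F_φ(x_n − x) ≤ ε·I_H and F_φ(y_n − y) ≤ ε·I_H in the Loewner order), then ‖φ(x_n, y_n) − φ(x, y)‖ → 0 in the operator norm. -/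
/-! For a positive operator `T`, the Loewner bound `T ≤ ε • 1` is the norm bound `‖T‖ ≤ ε`, so
convergence with respect to the operator-valued norm is convergence to zero of the scalars
`‖F (xₙ - x)‖`. Continuity is then the usual argument for a bounded bilinear map:
`φ(xₙ, yₙ) - φ(x, y) = φ(xₙ - x, yₙ - y) + φ(xₙ - x, y) + φ(x, yₙ - y)`, and the bound on `φ`
sends each term to zero. -/

section

open Filter Topology

theorem biadditive_apply_sub_apply {X Y E : Type*} [AddCommGroup X] [AddCommGroup Y]
    [AddCommGroup E] (B : X →+ Y →+ E) (x x' : X) (y y' : Y) :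
    B x' y' - B x y = B (x' - x) (y' - y) + B (x' - x) y + B x (y' - y) := by
  simp only [map_sub, AddMonoidHom.sub_apply]
  abel

theorem tendsto_biadditive_of_norm_le {ι X Y E : Type*} [AddCommGroup X] [AddCommGroup Y]
    [SeminormedAddCommGroup E] (B : X →+ Y →+ E) {p : X → ℝ} {q : Y → ℝ} {M : ℝ}
    (hB : ∀ x y, ‖B x y‖ ≤ M * p x * q y) {l : Filter ι} {xs : ι → X} {ys : ι → Y} {x : X} {y : Y}
    (hx : Tendsto (fun i => p (xs i - x)) l (𝓝 0))
    (hy : Tendsto (fun i => q (ys i - y)) l (𝓝 0)) :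
    Tendsto (fun i => B (xs i) (ys i)) l (𝓝 (B x y)) := by
  have hlim : Tendsto (fun i => M * p (xs i - x) * q (ys i - y) + M * p (xs i - x) * q y
      + M * p x * q (ys i - y)) l (𝓝 0) := by
    simpa using (((hx.const_mul M).mul hy).add ((hx.const_mul M).mul_const (q y))).add
      (hy.const_mul (M * p x))
  refine tendsto_iff_norm_sub_tendsto_zero.2 (squeeze_zero (fun _ => norm_nonneg _) ?_ hlim)
  intro i
  rw [biadditive_apply_sub_apply]
  exact norm_add₃_le.trans (add_le_add_three (hB _ _) (hB _ _) (hB _ _))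

theorem tendsto_norm_zero_iff_eventually_le_smul_one {ι A : Type*} [CStarAlgebra A]
    [PartialOrder A] [StarOrderedRing A] {l : Filter ι} {a : ι → A} (ha : ∀ i, 0 ≤ a i) :
    Tendsto (fun i => ‖a i‖) l (𝓝 0) ↔ ∀ ε : ℝ, 0 < ε → ∀ᶠ i in l, a i ≤ ε • (1 : A) := by
  rw [← tendsto_zero_iff_norm_tendsto_zero, Metric.nhds_basis_closedBall.tendsto_right_iff]
  refine forall₂_congr fun ε hε => eventually_congr (.of_forall fun i => ?_)
  rw [mem_closedBall_zero_iff, CStarAlgebra.norm_le_iff_le_algebraMap (a i) hε.le (ha i),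
    Algebra.algebraMap_eq_smul_one]

theorem bounded_opValuedInner_continuous_general {ι X A : Type*} [AddCommGroup X]
    [CStarAlgebra A] [PartialOrder A] [StarOrderedRing A] (φ : X → X → A)
    (hadd₁ : ∀ x y z, φ (x + y) z = φ x z + φ y z)
    (hadd₂ : ∀ x y z, φ x (y + z) = φ x y + φ x z)
    (F : X → A) (hsqrt : ∀ x, 0 ≤ F x ∧ F x * F x = φ x x)
    (M : ℝ) (hbound : ∀ x y, ‖φ x y‖ ≤ M * ‖F x‖ * ‖F y‖)
    {l : Filter ι} {xs ys : ι → X} {x y : X}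
    (hx : ∀ ε : ℝ, 0 < ε → ∀ᶠ i in l, F (xs i - x) ≤ ε • (1 : A))
    (hy : ∀ ε : ℝ, 0 < ε → ∀ᶠ i in l, F (ys i - y) ≤ ε • (1 : A)) :
    Tendsto (fun i => φ (xs i) (ys i)) l (𝓝 (φ x y)) := by
  let B : X →+ X →+ A := .mk' (fun x => .mk' (φ x) (hadd₂ x))
    fun x y => AddMonoidHom.ext (hadd₁ x y)
  exact tendsto_biadditive_of_norm_le B hbound
    ((tendsto_norm_zero_iff_eventually_le_smul_one fun _ => (hsqrt _).1).2 hx)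
    ((tendsto_norm_zero_iff_eventually_le_smul_one fun _ => (hsqrt _).1).2 hy)

end

/-- Let `φ : X × X → L(H)` be an `L(H)`-valued inner product on a complex vector space `X`
such that the positive square root `Fφ x` of `φ x x` defines an `L(H)`-valued norm on `X`
(triangle inequality in the Loewner order and absolute homogeneity), and suppose `φ` is
bounded with constant `M > 0`.  If `(xₙ)` and `(yₙ)` converge to `x` and `y` respectively
with respect to `Fφ` (Loewner-order formulation), then `‖φ xₙ yₙ - φ x y‖ → 0`. -/
theorem bounded_opValuedInner_continuous
    {X H : Type*} [AddCommGroup X] [Module ℂ X]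
    [NormedAddCommGroup H] [InnerProductSpace ℂ H] [CompleteSpace H] [Nontrivial H]
    (φ : X → X → H →L[ℂ] H)
    (hadd₁ : ∀ x y z, φ (x + y) z = φ x z + φ y z)
    (hsmul₁ : ∀ (c : ℂ) (x y : X), φ (c • x) y = c • φ x y)
    (hadd₂ : ∀ x y z, φ x (y + z) = φ x y + φ x z)
    (hsmul₂ : ∀ (c : ℂ) (x y : X), φ x (c • y) = (starRingEnd ℂ c) • φ x y)
    (hpos : ∀ x, (φ x x).IsPositive)
    (hdef : ∀ x, φ x x = 0 ↔ x = 0)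
    (hadj : ∀ x y, φ x y = ContinuousLinearMap.adjoint (φ y x))
    (Fφ : X → H →L[ℂ] H)
    (hsqrt : ∀ x, (Fφ x).IsPositive ∧ Fφ x * Fφ x = φ x x)
    (htriangle : ∀ x y, (Fφ x + Fφ y - Fφ (x + y)).IsPositive)
    (hhomog : ∀ (c : ℂ) (x : X), Fφ (c • x) = ‖c‖ • Fφ x)
    (M : ℝ) (hM : 0 < M)
    (hbound : ∀ x y, ‖φ x y‖ ≤ M * ‖Fφ x‖ * ‖Fφ y‖)
    (x y : X) (xs ys : ℕ → X)
    (hx : ∀ ε : ℝ, 0 < ε → ∃ N : ℕ, ∀ n ≥ N,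
      (ε • (1 : H →L[ℂ] H) - Fφ (xs n - x)).IsPositive)
    (hy : ∀ ε : ℝ, 0 < ε → ∃ N : ℕ, ∀ n ≥ N,
      (ε • (1 : H →L[ℂ] H) - Fφ (ys n - y)).IsPositive) :
    Filter.Tendsto (fun n => ‖φ (xs n) (ys n) - φ x y‖) Filter.atTop (nhds 0) := by
  simp only [← ContinuousLinearMap.nonneg_iff_isPositive, sub_nonneg,
    ← Filter.eventually_atTop] at hsqrt hx hy
  exact tendsto_iff_norm_sub_tendsto_zero.1
    (bounded_opValuedInner_continuous_general φ hadd₁ hadd₂ Fφ hsqrt M hbound hx hy)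
end
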